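/- Fix μ > 0, λ ∈ (0,1), α_0, α_1, α_2 ∈ ℝ with cos α⁻ > 0 and λ·cos α_0 + (1−λ)·cos α⁺ > 0, and let ξ̄ be the Type 1 CCW equilibrium: κ_{1b} = κ_{2b} = π/2, κ_1 = π/2 + α⁻, κ_2 = π/2 − α⁻, ρ_{1b} = ρ_{2b} = λ/(μλcos α_0 + μ(1−λ)cos α⁺), ρ = 2ρ_{1b}cos α⁻. Then the characteristic polynomial of the 7×7 Jacobian matrix A of the two-agent closed-loop vector field f at ξ̄ is P(x) = (x² + δ²)·(x² + λΨ·x + λδ²)·(x³ + λΨ·x² + δ²·x + (1−λ)·μ·sin α⁺·δ²), where δ = μ(cos α_0 + ((1−λ)/λ)·cos α⁺) and Ψ = μ(sin α_0 + ((1−λ)/λ)·sin α⁺). -/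

import Mathlib

open Real

/-- The two-agent closed-loop vector field on states
`ξ = (κ₁, κ₂, ρ, κ₁b, κ₂b, ρ₁b, ρ₂b)`. -/
noncomputable def twoAgentF (μ lam α0 α1 α2 : ℝ) (ξ : Fin 7 → ℝ) : Fin 7 → ℝ :=
  ![-μ * ((1 - lam) * sin (ξ 0 - α1) + lam * sin (ξ 3 - α0))
      + (lam / ξ 2) * (sin (ξ 0) + sin (ξ 1)),
    -μ * ((1 - lam) * sin (ξ 1 - α2) + lam * sin (ξ 4 - α0))
      + (lam / ξ 2) * (sin (ξ 0) + sin (ξ 1)),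
    -(cos (ξ 0) + cos (ξ 1)),
    (-μ * ((1 - lam) * sin (ξ 0 - α1) + lam * sin (ξ 3 - α0))
      + (lam / ξ 2) * (sin (ξ 0) + sin (ξ 1)))
      - (1 / ξ 2) * (sin (ξ 0) + sin (ξ 1)) + (1 / ξ 5) * sin (ξ 3),
    (-μ * ((1 - lam) * sin (ξ 1 - α2) + lam * sin (ξ 4 - α0))
      + (lam / ξ 2) * (sin (ξ 0) + sin (ξ 1)))
      - (1 / ξ 2) * (sin (ξ 0) + sin (ξ 1)) + (1 / ξ 6) * sin (ξ 4),
    -cos (ξ 3),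
    -cos (ξ 4)]

/-- First constraint function for the two-agent system. -/
noncomputable def gOne (ξ : Fin 7 → ℝ) : ℝ :=
  ξ 2 - ξ 5 * cos (ξ 3 - ξ 0) - ξ 6 * cos (ξ 4 - ξ 1)

/-- Second constraint function for the two-agent system. -/
noncomputable def gTwo (ξ : Fin 7 → ℝ) : ℝ :=
  ξ 5 * sin (ξ 3 - ξ 0) + ξ 6 * sin (ξ 4 - ξ 1)

/-!
Linearized at the equilibrium, both agents obey the same three-dimensional equation in
`(κ, ρ_b, κ_b)` and are driven by the same forcing, built from `κ₁ - κ₂` and `ρ`. The difference of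
the agents is therefore autonomous and gives the cubic factor; the agents moving in unison,
together with `ρ`, give a quartic. In the unison mode the linearizations `κ_b - κ` and
`ρ - 2 cos α⁻ ρ_b` of the constraints `gTwo` and `gOne` (up to nonzero factors) form a harmonic
oscillator, which is the factor `X² + δ²`; the damped quadratic factor is the motion on their common
zero set. Each splitting block-triangularizes the matrix by a unipotent change of coordinates.
-/

section BlockTriangularization

open Matrix

variable {R m n : Type*} [CommRing R] [Fintype m] [DecidableEq m] [Fintype n] [DecidableEq n]

-- The hypothesis says that the linear system `x' = A x + B y`, `y' = C x + D y` leaves the subspace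
-- `y + G x = 0` invariant.
theorem charpoly_fromBlocks_of_add_mul_eq {A : Matrix m m R} {B : Matrix m n R} {C : Matrix n m R}
    {D : Matrix n n R} {G : Matrix n m R} (h : C + G * A = (D + G * B) * G) :
    (fromBlocks A B C D).charpoly = (A - B * G).charpoly * (D + G * B).charpoly := by
  have hC : C = (D + G * B) * G - G * A := eq_sub_of_add_eq h
  have hconj : fromBlocks A B C D =
      fromBlocks 1 0 (-G) 1 * (fromBlocks (A - B * G) B 0 (D + G * B) * fromBlocks 1 0 G 1) := by
    simp [fromBlocks_multiply, hC, sub_eq_neg_add]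
  have hinv : fromBlocks 1 0 G 1 * fromBlocks 1 0 (-G) 1 = (1 : Matrix (m ⊕ n) (m ⊕ n) R) := by
    simp [fromBlocks_multiply]
  rw [hconj, charpoly_mul_comm, Matrix.mul_assoc, hinv, Matrix.mul_one, charpoly_fromBlocks_zero₂₁]

-- This is the matrix, in the coordinates `(x₂, z, x₁)`, of the system
-- `xᵢ' = M xᵢ + N (x₁ - x₂) + V z`, `z' = F (x₁ + x₂) + K z`, in which `x₁ - x₂` is autonomous.
theorem charpoly_fromBlocks_twin (M N : Matrix m m R) (V : Matrix m n R) (F : Matrix n m R)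
    (K : Matrix n n R) :
    (fromBlocks (fromBlocks (M - N) V F K) (fromRows N F) (fromCols (-N) V) (M + N)).charpoly =
      (fromBlocks M V (2 • F) K).charpoly * M.charpoly := by
  let G : Matrix m (m ⊕ n) R := fromCols (-1) 0
  have hdiff : M + N + G * fromRows N F = M := by simp [G, fromCols_mul_fromRows]
  have hunison : fromBlocks (M - N) V F K - fromRows N F * G = fromBlocks M V (2 • F) K := by
    rw [fromRows_mul_fromCols, sub_eq_add_neg, fromBlocks_neg, fromBlocks_add]
    simp [two_smul]
  have hinvariant :
      fromCols (-N) V + G * fromBlocks (M - N) V F K = (M + N + G * fromRows N F) * G := by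
    rw [hdiff, fromCols_mul_fromBlocks, mul_fromCols]
    ext i (j | j) <;> simp [sub_eq_add_neg]
  rw [charpoly_fromBlocks_of_add_mul_eq hinvariant, hdiff, hunison]

end BlockTriangularization

section LinearizedSystem

open Matrix Polynomial

variable {R : Type*} [CommRing R]

/-- The matrix of one agent, in the coordinates `(κ, ρ_b, κ_b)`, when the other agent is ignored:
`p` and `q` are the feedback gains on `κ` and `κ_b`, and `d` is the squared angular velocity. -/
def agentMatrix (p q d : R) : Matrix (Fin 3) (Fin 3) R :=
  !![-p, 0, -q; 0, 0, 1; -p, -d, -q]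

/-- The effect on one agent, in the coordinates `(κ, ρ_b, κ_b)`, of a term `g` of the linearized
decrease of `(sin κ₁ + sin κ₂) / ρ`, the rotation rate of the line of sight between the agents: this
rate enters `κ'` with weight `l` and `κ_b'` with weight `l - 1`. -/
def sightMatrix (l g : R) : Matrix (Fin 3) (Fin 1) R :=
  !![-(l * g); 0; -((l - 1) * g)]

/-- The linearized two-agent vector field, in the state order of `twoAgentF`; the rotation rate of
the line of sight between the agents decreases by `u * (κ₁ - κ₂) + w * ρ`, and
`ρ' = c * (κ₁ + κ₂)`. The other parameters are those of `agentMatrix` and `sightMatrix`. -/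
def linearizedTwoAgent (p q d l u w c : R) (v : Fin 7 → R) : Fin 7 → R :=
  ![-p * v 0 - q * v 3 - l * (u * (v 0 - v 1) + w * v 2),
    -p * v 1 - q * v 4 - l * (u * (v 0 - v 1) + w * v 2),
    c * (v 0 + v 1),
    -p * v 0 - q * v 3 - (l - 1) * (u * (v 0 - v 1) + w * v 2) - d * v 5,
    -p * v 1 - q * v 4 - (l - 1) * (u * (v 0 - v 1) + w * v 2) - d * v 6,
    v 3,
    v 4]

/-- The grouping of the seven state indices as `((κ₂, ρ₂b, κ₂b), ρ), (κ₁, ρ₁b, κ₁b)`. -/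
noncomputable def agentEquiv : (Fin 3 ⊕ Fin 1) ⊕ Fin 3 ≃ Fin 7 :=
  Equiv.ofBijective (Sum.elim (Sum.elim ![1, 6, 4] ![2]) ![0, 5, 3]) (by decide)

theorem charpoly_agentMatrix (p q d : R) :
    (agentMatrix p q d).charpoly = X ^ 3 + C (p + q) * X ^ 2 + C d * X + C (p * d) := by
  have hcharmatrix : (agentMatrix p q d).charmatrix =
      !![X + C p, 0, C q; 0, X, -1; C p, C d, X + C q] := by
    ext i j : 2
    fin_cases i <;> fin_cases j <;> simp [agentMatrix]
  rw [Matrix.charpoly, hcharmatrix, det_fin_three, C_add, C_mul]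
  simp only [of_apply, cons_val]
  ring

theorem charpoly_unison [Nontrivial R] (p q l w c : R) :
    (fromBlocks (agentMatrix p q (2 * c * w)) (sightMatrix l w) (2 • !![c, 0, 0]) 0).charpoly =
      (X ^ 2 + C (p + q) * X + C (l * (2 * c * w))) * (X ^ 2 + C (2 * c * w)) := by
  let e : Fin 3 ⊕ Fin 1 ≃ Fin 2 ⊕ Fin 2 :=
    finSumFinEquiv.trans (finSumFinEquiv (m := 2) (n := 2)).symm
  have hblocks : reindex e e
      (fromBlocks (agentMatrix p q (2 * c * w)) (sightMatrix l w) (2 • !![c, 0, 0]) 0) =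
      fromBlocks !![-p, 0; 0, 0] !![-q, -(l * w); 1, 0]
        !![-p, -(2 * c * w); 2 * c, 0] !![-q, -((l - 1) * w); 0, 0] := by
    ext (i | i) (j | j) <;> fin_cases i <;> fin_cases j <;>
      simp [e, finSumFinEquiv, agentMatrix, sightMatrix] <;> rfl
  -- The rows of `y + G x` are `κ_b - κ` and `ρ - 2 c ρ_b`.
  let G : Matrix (Fin 2) (Fin 2) R := !![-1, 0; 0, -(2 * c)]
  have hzeroSet : !![-p, 0; 0, 0] - !![-q, -(l * w); 1, 0] * G =
      !![-(p + q), -(l * (2 * c * w)); 1, 0] := by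
    ext i j
    fin_cases i <;> fin_cases j <;> simp [G, neg_add_eq_sub, mul_assoc, mul_comm, mul_left_comm]
  have hoscillator : !![-q, -((l - 1) * w); 0, 0] + G * !![-q, -(l * w); 1, 0] =
      !![0, w; -(2 * c), 0] := by
    ext i j
    fin_cases i <;> fin_cases j <;> simp [G, sub_mul]
  have hinvariant : !![-p, -(2 * c * w); 2 * c, 0] + G * !![-p, 0; 0, 0] =
      (!![-q, -((l - 1) * w); 0, 0] + G * !![-q, -(l * w); 1, 0]) * G := by
    rw [hoscillator]
    ext i j
    fin_cases i <;> fin_cases j <;> simp [G, mul_comm]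
  rw [← charpoly_reindex e, hblocks, charpoly_fromBlocks_of_add_mul_eq hinvariant, hzeroSet,
    hoscillator, charpoly_fin_two, charpoly_fin_two]
  simp only [trace_fin_two_of, det_fin_two_of, map_add, map_neg, map_mul, map_zero, map_one,
    map_sub]
  ring

theorem submatrix_linearizedTwoAgent (p q d l u w c : R) :
    (of fun i j => linearizedTwoAgent p q d l u w c (Pi.single j 1) i).submatrix
        agentEquiv agentEquiv =
      let M := agentMatrix p q d
      let N := sightMatrix l u * (!![1, 0, 0] : Matrix (Fin 1) (Fin 3) R)
      fromBlocks (fromBlocks (M - N) (sightMatrix l w) !![c, 0, 0] 0) (fromRows N !![c, 0, 0])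
        (fromCols (-N) (sightMatrix l w)) (M + N) := by
  ext ((i | i) | i) ((j | j) | j) <;> fin_cases i <;> fin_cases j <;>
    simp [agentEquiv, linearizedTwoAgent, agentMatrix, sightMatrix] <;> ring

theorem charpoly_linearizedTwoAgent [Nontrivial R] (p q l u w c : R) :
    (of fun i j => linearizedTwoAgent p q (2 * c * w) l u w c (Pi.single j 1) i).charpoly =
      (X ^ 2 + C (2 * c * w)) * (X ^ 2 + C (p + q) * X + C (l * (2 * c * w))) *
        (X ^ 3 + C (p + q) * X ^ 2 + C (2 * c * w) * X + C (p * (2 * c * w))) := by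
  rw [← charpoly_reindex agentEquiv.symm, reindex_apply, Equiv.symm_symm,
    submatrix_linearizedTwoAgent, charpoly_fromBlocks_twin, charpoly_unison, charpoly_agentMatrix,
    mul_comm (X ^ 2 + C (2 * c * w))]

end LinearizedSystem

section Jacobian

open ContinuousLinearMap

section General

variable {E : Type*} [NormedAddCommGroup E] [NormedSpace ℝ E] {f g : E → ℝ} {f' g' : E →L[ℝ] ℝ}
  {x : E}

theorem hasFDerivAt_const_div_mul (a : ℝ) (hf : HasFDerivAt f f' x) (hg : HasFDerivAt g g' x)
    (hx : f x ≠ 0) :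
    HasFDerivAt (fun y => a / f y * g y) ((a / f x) • g' - (a * g x / f x ^ 2) • f') x := by
  have h := (((hasDerivAt_inv hx).comp_hasFDerivAt x hf).const_mul a).mul hg
  simp only [div_eq_mul_inv]
  refine h.congr_fderiv ?_
  ext v
  simp [sub_eq_add_neg, mul_assoc, mul_left_comm]

theorem hasFDerivAt_feedback {a b p q : ℝ} (μ lam : ℝ) (hf : HasFDerivAt f f' x)
    (hg : HasFDerivAt g g' x) (hfx : f x - a = π / 2 - p) (hgx : g x - b = π / 2 - q) :
    HasFDerivAt (fun y => -μ * ((1 - lam) * sin (f y - a) + lam * sin (g y - b)))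
      (-(μ * (1 - lam) * sin p) • f' - (μ * lam * sin q) • g') x := by
  refine ((((hf.sub_const a).sin.const_mul (1 - lam)).add
    ((hg.sub_const b).sin.const_mul lam)).const_mul (-μ)).congr_fderiv ?_
  rw [hfx, hgx, cos_pi_div_two_sub, cos_pi_div_two_sub]
  module

theorem hasFDerivAt_beaconSight {δ : ℝ} (hδ : δ ≠ 0) (hf : HasFDerivAt f f' x)
    (hg : HasFDerivAt g g' x) (hfx : f x = δ⁻¹) (hgx : g x = π / 2) :
    HasFDerivAt (fun y => 1 / f y * sin (g y)) (-(δ ^ 2) • f') x := by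
  have hx : f x ≠ 0 := hfx ▸ inv_ne_zero hδ
  refine (hasFDerivAt_const_div_mul 1 hf hg.sin hx).congr_fderiv ?_
  ext v
  simp [hfx, hgx]

end General

/-- The Type 1 counterclockwise circling equilibrium on which both agents are at distance `r` from
the beacon, as a function of `r` and of `αm = (α₁ - α₂) / 2`. -/
noncomputable def ccwEquilibrium (r αm : ℝ) : Fin 7 → ℝ :=
  ![π / 2 + αm, π / 2 - αm, 2 * r * cos αm, π / 2, π / 2, r, r]

theorem sin_ccwEquilibrium_zero (r αm : ℝ) : sin (ccwEquilibrium r αm 0) = cos αm :=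
  (congrArg sin (add_comm _ _)).trans (sin_add_pi_div_two αm)

theorem sin_ccwEquilibrium_one (r αm : ℝ) : sin (ccwEquilibrium r αm 1) = cos αm :=
  sin_pi_div_two_sub αm

theorem hasFDerivAt_sight {αm δ : ℝ} (a : ℝ) (hαm : cos αm ≠ 0) (hδ : δ ≠ 0) :
    HasFDerivAt (fun ξ : Fin 7 → ℝ => a / ξ 2 * (sin (ξ 0) + sin (ξ 1)))
      (-a • ((δ * sin αm / (2 * cos αm)) • (proj (R := ℝ) (φ := fun _ : Fin 7 => ℝ) 0 - proj 1) +
        (δ ^ 2 / (2 * cos αm)) • proj 2)) (ccwEquilibrium δ⁻¹ αm) := by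
  have hρ : ccwEquilibrium δ⁻¹ αm 2 = 2 * δ⁻¹ * cos αm := rfl
  have hcos₁ : cos (ccwEquilibrium δ⁻¹ αm 0) = -sin αm :=
    (congrArg cos (add_comm _ _)).trans (cos_add_pi_div_two αm)
  have hcos₂ : cos (ccwEquilibrium δ⁻¹ αm 1) = sin αm := cos_pi_div_two_sub αm
  have hsin := (hasFDerivAt_apply (𝕜 := ℝ) 0 (ccwEquilibrium δ⁻¹ αm)).sin.fun_add
    (hasFDerivAt_apply (𝕜 := ℝ) 1 (ccwEquilibrium δ⁻¹ αm)).sin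
  refine (hasFDerivAt_const_div_mul a (hasFDerivAt_apply 2 _) hsin
    (hρ ▸ by simp [hαm, hδ])).congr_fderiv ?_
  rw [hρ, hcos₁, hcos₂, sin_ccwEquilibrium_zero, sin_ccwEquilibrium_one]
  match_scalars <;> field_simp
  ring

theorem fderiv_twoAgentF_ccwEquilibrium (μ lam α0 αp : ℝ) {αm δ : ℝ} (hαm : cos αm ≠ 0)
    (hδ : δ ≠ 0) (i : Fin 7) (v : Fin 7 → ℝ) :
    fderiv ℝ (fun ξ => twoAgentF μ lam α0 (αp + αm) (αp - αm) ξ i) (ccwEquilibrium δ⁻¹ αm) v =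
      linearizedTwoAgent (μ * (1 - lam) * sin αp) (μ * lam * sin α0) (δ ^ 2) lam
        (δ * sin αm / (2 * cos αm)) (δ ^ 2 / (2 * cos αm)) (cos αm) v i := by
  let ξ := ccwEquilibrium δ⁻¹ αm
  have hξ (k : Fin 7) := hasFDerivAt_apply (𝕜 := ℝ) k ξ
  have hκ₁ := (hasFDerivAt_feedback μ lam (hξ 0) (hξ 3) (add_sub_add_right_eq_sub (π / 2) αp αm)
    (Eq.refl (π / 2 - α0))).add (hasFDerivAt_sight lam hαm hδ)
  have hκ₂ := (hasFDerivAt_feedback μ lam (hξ 1) (hξ 4) (sub_sub_sub_cancel_right (π / 2) αp αm)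
    (Eq.refl (π / 2 - α0))).add (hasFDerivAt_sight lam hαm hδ)
  have hρ := ((hξ 0).cos.add (hξ 1).cos).neg
  rw [sin_ccwEquilibrium_zero, sin_ccwEquilibrium_one] at hρ
  have hκ₁b := (hκ₁.sub (hasFDerivAt_sight 1 hαm hδ)).add
    (hasFDerivAt_beaconSight hδ (hξ 5) (hξ 3) rfl rfl)
  have hκ₂b := (hκ₂.sub (hasFDerivAt_sight 1 hαm hδ)).add
    (hasFDerivAt_beaconSight hδ (hξ 6) (hξ 4) rfl rfl)
  fin_cases i
  · refine (congrArg (· v) hκ₁.fderiv).trans ?_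
    simp only [linearizedTwoAgent, Fin.reduceFinMk, Matrix.cons_val, add_apply, sub_apply,
      smul_apply, proj_apply, smul_eq_mul]
    ring
  · refine (congrArg (· v) hκ₂.fderiv).trans ?_
    simp only [linearizedTwoAgent, Fin.reduceFinMk, Matrix.cons_val, add_apply, sub_apply,
      smul_apply, proj_apply, smul_eq_mul]
    ring
  · refine (congrArg (· v) hρ.fderiv).trans ?_
    simp only [linearizedTwoAgent, Fin.reduceFinMk, Matrix.cons_val, add_apply, neg_apply,
      smul_apply, proj_apply, smul_eq_mul]
    ring
  · refine (congrArg (· v) hκ₁b.fderiv).trans ?_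
    simp only [linearizedTwoAgent, Fin.reduceFinMk, Matrix.cons_val, add_apply, sub_apply,
      smul_apply, proj_apply, smul_eq_mul]
    ring
  · refine (congrArg (· v) hκ₂b.fderiv).trans ?_
    simp only [linearizedTwoAgent, Fin.reduceFinMk, Matrix.cons_val, add_apply, sub_apply,
      smul_apply, proj_apply, smul_eq_mul]
    ring
  · refine (congrArg (· v) (hξ 3).cos.neg.fderiv).trans ?_
    simp [ξ, ccwEquilibrium, linearizedTwoAgent]
  · refine (congrArg (· v) (hξ 4).cos.neg.fderiv).trans ?_
    simp [ξ, ccwEquilibrium, linearizedTwoAgent]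

end Jacobian

open Polynomial in
theorem stmt16_general (μ lam α0 α1 α2 : ℝ) (hμ : μ ≠ 0) (hlam : lam ≠ 0) (αp αm : ℝ)
    (hαp : αp = (α1 + α2) / 2) (hαm : αm = (α1 - α2) / 2) (hcos : cos αm ≠ 0)
    (hne : lam * cos α0 + (1 - lam) * cos αp ≠ 0) :
    let ξbar := ccwEquilibrium (lam / (μ * lam * cos α0 + μ * (1 - lam) * cos αp)) αm
    let A : Matrix (Fin 7) (Fin 7) ℝ :=
      Matrix.of fun i j =>
        fderiv ℝ (fun ξ => twoAgentF μ lam α0 α1 α2 ξ i) ξbar (Pi.single j 1)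
    let δ : ℝ := μ * (cos α0 + (1 - lam) / lam * cos αp)
    let Ψ : ℝ := μ * (sin α0 + (1 - lam) / lam * sin αp)
    A.charpoly = (X ^ 2 + C (δ ^ 2)) * (X ^ 2 + C (lam * Ψ) * X + C (lam * δ ^ 2)) *
      (X ^ 3 + C (lam * Ψ) * X ^ 2 + C (δ ^ 2) * X + C ((1 - lam) * μ * sin αp * δ ^ 2)) := by
  intro ξbar A δ Ψ
  have hα1 : α1 = αp + αm := by rw [hαp, hαm]; ring
  have hα2 : α2 = αp - αm := by rw [hαp, hαm]; ring
  have hδ_eq : δ = μ * (lam * cos α0 + (1 - lam) * cos αp) / lam := by simp only [δ]; field_simp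
  have hδ : δ ≠ 0 := hδ_eq ▸ div_ne_zero (mul_ne_zero hμ hne) hlam
  have hξbar : ξbar = ccwEquilibrium δ⁻¹ αm := by
    rw [hδ_eq, inv_div, mul_add, ← mul_assoc, ← mul_assoc]
  have hω : 2 * cos αm * (δ ^ 2 / (2 * cos αm)) = δ ^ 2 := by field_simp
  have hΨ : μ * (1 - lam) * sin αp + μ * lam * sin α0 = lam * Ψ := by
    simp only [Ψ]; field_simp; ring
  rw [mul_comm (1 - lam) μ]
  have hcharpoly := charpoly_linearizedTwoAgent (μ * (1 - lam) * sin αp) (μ * lam * sin α0) lam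
    (δ * sin αm / (2 * cos αm)) (δ ^ 2 / (2 * cos αm)) (cos αm)
  simp only [A, hξbar, hα1, hα2, fderiv_twoAgentF_ccwEquilibrium μ lam α0 αp hcos hδ]
  rwa [hω, hΨ] at hcharpoly

open Polynomial in
/-- The characteristic polynomial of the Jacobian of the two-agent closed-loop
vector field at the Type 1 CCW circling equilibrium. -/
theorem stmt16 (μ lam α0 α1 α2 : ℝ) (hμ : 0 < μ) (hlam : lam ∈ Set.Ioo (0:ℝ) 1)
    (αp αm : ℝ) (hαp : αp = (α1 + α2) / 2) (hαm : αm = (α1 - α2) / 2)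
    (hcos : cos αm > 0)
    (hpos : lam * cos α0 + (1 - lam) * cos αp > 0) :
    (let ρ1b : ℝ := lam / (μ * lam * cos α0 + μ * (1 - lam) * cos αp)
     let ξbar : Fin 7 → ℝ := ![π/2 + αm, π/2 - αm, 2 * ρ1b * cos αm, π/2, π/2, ρ1b, ρ1b]
     let A : Matrix (Fin 7) (Fin 7) ℝ :=
       Matrix.of fun i j =>
         fderiv ℝ (fun ξ => twoAgentF μ lam α0 α1 α2 ξ i) ξbar (Pi.single j 1)
     let δ : ℝ := μ * (cos α0 + ((1 - lam) / lam) * cos αp)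
     let Ψ : ℝ := μ * (sin α0 + ((1 - lam) / lam) * sin αp)
     A.charpoly = (X ^ 2 + C (δ ^ 2)) * (X ^ 2 + C (lam * Ψ) * X + C (lam * δ ^ 2)) *
       (X ^ 3 + C (lam * Ψ) * X ^ 2 + C (δ ^ 2) * X + C ((1 - lam) * μ * sin αp * δ ^ 2))) :=
  stmt16_general μ lam α0 α1 α2 hμ.ne' hlam.1.ne' αp αm hαp hαm hcos.ne' hpos.ne'
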